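/- Let A be a finite alphabet. Every rational bifix code X ⊆ A+ is contained in a rational complete bifix code Z ⊆ A+. -/

import Mathlib

/-- A language is factorial if it is closed under taking factors (infixes). -/
def Factorial {A : Type*} (F : Set (List A)) : Prop :=
  ∀ u w : List A, w ∈ F → u <:+: w → u ∈ F

/-- A language is prolongable if every word extends by a letter on both sides. -/
def Prolongable {A : Type*} (F : Set (List A)) : Prop :=
  ∀ u ∈ F, ∃ a b : A, (a :: u) ∈ F ∧ (u ++ [b]) ∈ F

/-- A subshift language: nonempty, factorial and prolongable. -/
def SubshiftLanguage {A : Type*} (F : Set (List A)) : Prop :=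
  F.Nonempty ∧ Factorial F ∧ Prolongable F

/-- A recurrent language. -/
def Recurrent {A : Type*} (F : Set (List A)) : Prop :=
  SubshiftLanguage F ∧ ∀ u ∈ F, ∀ v ∈ F, ∃ w : List A, u ++ w ++ v ∈ F

/-- A uniformly recurrent language. -/
def UniformlyRecurrent {A : Type*} (F : Set (List A)) : Prop :=
  SubshiftLanguage F ∧ ∀ u ∈ F, ∃ N : ℕ, ∀ w ∈ F, N ≤ w.length → u <:+: w

/-- The Kleene star of a set of words: all concatenations of finitely many elements. -/
def KStarSet {A : Type*} (X : Set (List A)) : Set (List A) :=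
  {w | ∃ l : List (List A), (∀ x ∈ l, x ∈ X) ∧ w = l.flatten}

/-- A code: a nonempty set of nonempty words with unique factorization. -/
def IsCode {A : Type*} (X : Set (List A)) : Prop :=
  X.Nonempty ∧ (∀ x ∈ X, x ≠ []) ∧
    ∀ l m : List (List A), (∀ x ∈ l, x ∈ X) → (∀ y ∈ m, y ∈ X) →
      l.flatten = m.flatten → l = m

/-- A prefix code: a nonempty set of nonempty words, none a proper prefix of another. -/
def PrefixCode {A : Type*} (X : Set (List A)) : Prop :=
  X.Nonempty ∧ (∀ x ∈ X, x ≠ []) ∧ ∀ x ∈ X, ∀ y ∈ X, x <+: y → x = y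

/-- A suffix code: a nonempty set of nonempty words, none a proper suffix of another. -/
def SuffixCode {A : Type*} (X : Set (List A)) : Prop :=
  X.Nonempty ∧ (∀ x ∈ X, x ≠ []) ∧ ∀ x ∈ X, ∀ y ∈ X, x <:+ y → x = y

/-- A bifix code is both a prefix code and a suffix code. -/
def BifixCode {A : Type*} (X : Set (List A)) : Prop :=
  PrefixCode X ∧ SuffixCode X

/-- `X` is right `F`-complete: every element of `F` is a prefix of an element of `X*`. -/
def RightFComplete {A : Type*} (X F : Set (List A)) : Prop :=
  ∀ u ∈ F, ∃ w ∈ KStarSet X, u <+: w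

/-- `X` is left `F`-complete: every element of `F` is a suffix of an element of `X*`. -/
def LeftFComplete {A : Type*} (X F : Set (List A)) : Prop :=
  ∀ u ∈ F, ∃ w ∈ KStarSet X, u <:+ w

/-- `X` is `F`-complete: both right and left `F`-complete. -/
def FComplete {A : Type*} (X F : Set (List A)) : Prop :=
  RightFComplete X F ∧ LeftFComplete X F

/-- The decoding map: a word over the alphabet `X` is sent to its concatenation in `A*`. -/
def decode {A : Type*} (X : Set (List A)) : List ↥X → List A :=
  fun l => (l.map Subtype.val).flatten

/-- A language is rational if it is accepted by a DFA with finitely many states. -/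
def IsRational {A : Type*} (L : Set (List A)) : Prop :=
  ∃ (σ : Type) (_ : Fintype σ) (M : DFA A σ), ∀ w : List A, w ∈ M.accepts ↔ w ∈ L
/-!
The parse enumerator `L_X` of a bifix code `X` counts the parses of a word with respect to `X`.
For `0 < D`, the words of `X` with at most `D` parses together with the minimal words with more than
`D` parses, called critical, form a set with parse enumerator `min D L_X`, which is a bifix code
unless it is empty. A bifix code with bounded parse enumerator is complete, so this settles the case
in which no word of `X` has more than `D` parses.

In general, `X` is first enlarged by the critical words that are neither prefixes nor suffixes of
words of `X`. Consider the occurrences of a word `u` that extend to the left or to the right to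
prefixes or suffixes of words of `X`. When `X` is rational, the number of these overhangs is bounded
by the number of states. A critical word that was left out creates an additional overhang for the
factor obtained by removing its first or last letter. Hence, in the enlarged code, the maximal
number of overhangs over the words with many parses is smaller than in `X`, and after finitely many
enlargements no overhang over a word with many parses is left: the numbers of parses of the words of
the code are then bounded.
-/

namespace BifixCode

variable {A : Type*} {X Y : Set (List A)} {u v w z : List A} {D k : ℕ}

/-! ### Reversal -/

theorem suffixCode_iff_prefixCode_reverse : SuffixCode X ↔ PrefixCode (List.reverse ⁻¹' X) := by
  constructor <;> rintro ⟨⟨x, hx⟩, hnil, hX⟩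
  · refine ⟨⟨x.reverse, by simpa using hx⟩, fun y hy h => hnil _ hy (by simp [h]), ?_⟩
    exact fun y hy z hz hyz => List.reverse_injective (hX _ hy _ hz (List.reverse_suffix.2 hyz))
  · refine ⟨⟨x.reverse, hx⟩, fun y hy h => hnil [] (by simpa [h] using hy) rfl, ?_⟩
    exact fun y hy z hz hyz => List.reverse_injective
      (hX _ (by simpa using hy) _ (by simpa using hz) (List.reverse_prefix.2 hyz))

theorem preimage_reverse_preimage_reverse (X : Set (List A)) :
    List.reverse ⁻¹' (List.reverse ⁻¹' X) = X := by
  ext w; simp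

theorem reverse (hX : BifixCode X) : BifixCode (List.reverse ⁻¹' X) :=
  ⟨suffixCode_iff_prefixCode_reverse.1 hX.2, suffixCode_iff_prefixCode_reverse.2
    ((preimage_reverse_preimage_reverse X).symm ▸ hX.1)⟩

theorem nil_notMem (hX : BifixCode X) : [] ∉ X := fun h => hX.1.2.1 [] h rfl

/-- The words of `X A*`. -/
def HasPrefixIn (X : Set (List A)) (w : List A) : Prop := ∃ x ∈ X, x <+: w

/-- The words of `A* X`. -/
def HasSuffixIn (X : Set (List A)) (w : List A) : Prop := ∃ x ∈ X, x <:+ w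

theorem hasPrefixIn_of_mem (h : w ∈ X) : HasPrefixIn X w := ⟨w, h, List.prefix_rfl⟩

theorem hasSuffixIn_of_mem (h : w ∈ X) : HasSuffixIn X w := ⟨w, h, List.suffix_rfl⟩

theorem not_hasPrefixIn_nil (hX : [] ∉ X) : ¬ HasPrefixIn X [] := by
  simpa [HasPrefixIn] using hX

theorem hasPrefixIn_concat {b : A} :
    HasPrefixIn X (w ++ [b]) ↔ w ++ [b] ∈ X ∨ HasPrefixIn X w := by
  simp [HasPrefixIn, List.prefix_concat_iff, and_or_left, exists_or]

theorem hasSuffixIn_cons {a : A} : HasSuffixIn X (a :: w) ↔ a :: w ∈ X ∨ HasSuffixIn X w := by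
  simp [HasSuffixIn, List.suffix_cons_iff, and_or_left, exists_or]

theorem hasPrefixIn_reverse : HasPrefixIn (List.reverse ⁻¹' X) w.reverse ↔ HasSuffixIn X w := by
  constructor
  · exact fun ⟨x, hx, hxw⟩ => ⟨x.reverse, hx, by simpa using List.reverse_suffix.2 hxw⟩
  · exact fun ⟨x, hx, hxw⟩ => ⟨x.reverse, by simpa using hx, List.reverse_prefix.2 hxw⟩

/-! ### The parse enumerator -/

open Classical in
/-- The parse enumerator `L_X` of a bifix code `X`. A parse of `w` is a factorization
`w = s ++ y ++ p` where `s` has no suffix in `X`, `y ∈ X*` and `p` has no prefix in `X`.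
As `X` is bifix, a parse is determined by `p`, which may be any suffix of `w` without a prefix
in `X`; these suffixes are what is counted. -/
noncomputable def parseCount (X : Set (List A)) (w : List A) : ℕ :=
  w.tails.countP fun s => ¬ HasPrefixIn X s

theorem parseCount_nil (hX : [] ∉ X) : parseCount X [] = 1 := by
  simp [parseCount, not_hasPrefixIn_nil hX]

open Classical in
theorem parseCount_cons (a : A) (w : List A) :
    parseCount X (a :: w) = parseCount X w + if HasPrefixIn X (a :: w) then 0 else 1 := by
  simp [parseCount, List.countP_cons, ite_not]

theorem parseCount_eq_tail (h : HasPrefixIn X w) : parseCount X w = parseCount X w.tail := by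
  cases w with
  | nil => rfl
  | cons a w => simp [parseCount_cons, h]

theorem parseCount_eq_tail_add_one (hw : w ≠ []) (h : ¬ HasPrefixIn X w) :
    parseCount X w = parseCount X w.tail + 1 := by
  cases w with
  | nil => contradiction
  | cons a w => simp [parseCount_cons, h]

theorem parseCount_le_tail_add_one (X : Set (List A)) (w : List A) :
    parseCount X w ≤ parseCount X w.tail + 1 := by
  cases w with
  | nil => simp
  | cons a w => rw [parseCount_cons, List.tail_cons]; split_ifs <;> lia

theorem parseCount_le_append_left (s w : List A) : parseCount X w ≤ parseCount X (s ++ w) := by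
  induction s with
  | nil => rfl
  | cons a s ih => rw [List.cons_append, parseCount_cons]; lia

theorem parseCount_anti (h : ∀ z, z <:+: w → z ∈ X → z ∈ Y) : parseCount Y w ≤ parseCount X w := by
  refine List.countP_mono_left fun s hs => ?_
  have hsw : s <:+ w := (List.mem_tails _ _).1 hs
  suffices HasPrefixIn X s → HasPrefixIn Y s by simpa using mt this
  exact fun ⟨x, hx, hxs⟩ => ⟨x, h x (hxs.isInfix.trans hsw.isInfix) hx, hxs⟩

/- Reading `a :: (w ++ [b])` from the left or from the right adds the letters `a` and `b` to `w` in
either order; an element of `X` equal to the whole word is counted once on each side. -/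
open Classical in
theorem parseCount_concat (hX : BifixCode X) (w : List A) (b : A) :
    parseCount X (w ++ [b]) = parseCount X w + if HasSuffixIn X (w ++ [b]) then 0 else 1 := by
  induction w with
  | nil =>
    have hsingle : HasPrefixIn X [b] ↔ HasSuffixIn X [b] := by
      simp [HasPrefixIn, HasSuffixIn, List.prefix_cons_iff, List.suffix_cons_iff, or_comm]
    simp [parseCount_cons, hsingle]
  | cons a w ih =>
    have hleft : HasPrefixIn X (a :: (w ++ [b])) ↔ a :: (w ++ [b]) ∈ X ∨ HasPrefixIn X (a :: w) :=
      hasPrefixIn_concat (w := a :: w)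
    have hright := hasSuffixIn_cons (X := X) (a := a) (w := w ++ [b])
    have hleft_not : a :: (w ++ [b]) ∈ X → ¬ HasPrefixIn X (a :: w) := by
      rintro hmem ⟨x, hx, hxw⟩
      have := hX.1.2.2 x hx _ hmem (hxw.trans ⟨[b], rfl⟩)
      simpa [this] using hxw.length_le
    have hright_not : a :: (w ++ [b]) ∈ X → ¬ HasSuffixIn X (w ++ [b]) := by
      rintro hmem ⟨x, hx, hxw⟩
      have := hX.2.2.2 x hx _ hmem (hxw.trans (List.suffix_cons _ _))
      simpa [this] using hxw.length_le
    rw [List.cons_append, parseCount_cons, parseCount_cons, ih]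
    split_ifs <;> lia

theorem parseCount_reverse (hX : BifixCode X) (w : List A) :
    parseCount (List.reverse ⁻¹' X) w.reverse = parseCount X w := by
  classical
  induction w using List.reverseRecOn with
  | nil => rw [List.reverse_nil, parseCount_nil hX.nil_notMem, parseCount_nil hX.reverse.nil_notMem]
  | append_singleton w b ih =>
    rw [hX.parseCount_concat, ← hasPrefixIn_reverse, ← ih, List.reverse_concat, parseCount_cons]

theorem parseCount_eq_dropLast (hX : BifixCode X) (h : HasSuffixIn X w) :
    parseCount X w = parseCount X w.dropLast := by
  rw [← hX.parseCount_reverse, parseCount_eq_tail (hasPrefixIn_reverse.2 h), List.tail_reverse,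
    hX.parseCount_reverse]

theorem parseCount_le_dropLast_add_one (hX : BifixCode X) (w : List A) :
    parseCount X w ≤ parseCount X w.dropLast + 1 := by
  simpa [hX.parseCount_reverse] using parseCount_le_tail_add_one (List.reverse ⁻¹' X) w.reverse

theorem parseCount_le_of_isInfix (hX : BifixCode X) (h : u <:+: w) :
    parseCount X u ≤ parseCount X w := by
  obtain ⟨s, t, rfl⟩ := h
  calc parseCount X u ≤ parseCount X (s ++ u) := parseCount_le_append_left s u
    _ = parseCount (List.reverse ⁻¹' X) (s ++ u).reverse := (hX.parseCount_reverse _).symm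
    _ ≤ parseCount (List.reverse ⁻¹' X) (t.reverse ++ (s ++ u).reverse) :=
      parseCount_le_append_left _ _
    _ = parseCount X (s ++ u ++ t) := by rw [← List.reverse_append, hX.parseCount_reverse]

/-! ### Completeness -/

theorem rightFComplete_of_hasPrefixIn_append (hX : [] ∉ X)
    (h : ∀ u ≠ [], ∃ w, HasPrefixIn X (u ++ w)) : RightFComplete X Set.univ := by
  suffices ∀ n, ∀ u : List A, u.length = n → ∃ y ∈ KStarSet X, u <+: y from
    fun u _ => this _ u rfl
  intro n
  induction n using Nat.strong_induction_on with
  | _ n ih =>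
    rintro u rfl
    rcases eq_or_ne u [] with rfl | hu
    · exact ⟨[], ⟨[], by simp⟩, List.nil_prefix⟩
    obtain ⟨w, x, hx, hxuw⟩ := h u hu
    rcases List.prefix_or_prefix_of_prefix hxuw (List.prefix_append u w) with ⟨t, rfl⟩ | hux
    · have hx_pos : 0 < x.length := List.length_pos_iff.2 (ne_of_mem_of_not_mem hx hX)
      obtain ⟨_, ⟨l, hl, rfl⟩, ht⟩ := ih t.length (by simpa using hx_pos) t rfl
      exact ⟨x ++ l.flatten, ⟨x :: l, by simpa using ⟨hx, hl⟩, by simp⟩,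
        (List.prefix_append_right_inj x).2 ht⟩
    · exact ⟨x, ⟨[x], by simpa using hx, by simp⟩, hux⟩

theorem rightFComplete_of_bddAbove_parseCount (hX : [] ∉ X)
    (hb : BddAbove (Set.range (parseCount X))) : RightFComplete X Set.univ := by
  obtain ⟨w, hw⟩ : ∃ w, ∀ v, parseCount X v ≤ parseCount X w := by
    obtain ⟨w, hw⟩ := Nat.sSup_mem (Set.range_nonempty (parseCount X)) hb
    exact ⟨w, fun v => hw ▸ le_csSup hb ⟨v, rfl⟩⟩
  refine rightFComplete_of_hasPrefixIn_append hX fun u hu => ⟨w, ?_⟩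
  by_contra h
  have hgrow := parseCount_eq_tail_add_one (by simp [hu]) h
  rw [List.tail_append_of_ne_nil hu] at hgrow
  have := hw (u ++ w)
  have := parseCount_le_append_left (X := X) u.tail w
  lia

theorem reverse_mem_kStarSet (h : w ∈ KStarSet (List.reverse ⁻¹' X)) : w.reverse ∈ KStarSet X := by
  obtain ⟨l, hl, rfl⟩ := h
  refine ⟨(l.map List.reverse).reverse, fun x hx => ?_, List.reverse_flatten⟩
  simpa using hl x.reverse (by simpa using hx)

theorem fComplete_of_bddAbove_parseCount (hX : BifixCode X)
    (hb : BddAbove (Set.range (parseCount X))) : FComplete X Set.univ := by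
  refine ⟨rightFComplete_of_bddAbove_parseCount hX.nil_notMem hb, fun u _ => ?_⟩
  have hb' : BddAbove (Set.range (parseCount (List.reverse ⁻¹' X))) := by
    refine hb.mono ?_
    rintro _ ⟨w, rfl⟩
    exact ⟨w.reverse, by simp [← hX.parseCount_reverse]⟩
  obtain ⟨y, hy, huy⟩ :=
    rightFComplete_of_bddAbove_parseCount hX.reverse.nil_notMem hb' u.reverse trivial
  exact ⟨y.reverse, reverse_mem_kStarSet hy, by simpa using List.reverse_suffix.2 huy⟩

/-! ### Truncation of the parse enumerator -/

/-- The words with more than `D` parses that are minimal for this property in the factor order.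
For `0 < D` the empty word, for which `tail` and `dropLast` are not proper factors, is excluded. -/
def criticalWords (X : Set (List A)) (D : ℕ) : Set (List A) :=
  {w | D < parseCount X w ∧ parseCount X w.tail ≤ D ∧ parseCount X w.dropLast ≤ D}

/-- The words of `X` with at most `D` parses, completed to a bifix code of degree at most `D`. -/
def truncation (X : Set (List A)) (D : ℕ) : Set (List A) :=
  {x ∈ X | parseCount X x ≤ D} ∪ criticalWords X D

theorem criticalWords_reverse (hX : BifixCode X) (D : ℕ) :
    criticalWords (List.reverse ⁻¹' X) D = List.reverse ⁻¹' criticalWords X D := by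
  ext w
  have h (v : List A) : parseCount (List.reverse ⁻¹' X) v = parseCount X v.reverse := by
    rw [← hX.parseCount_reverse, List.reverse_reverse]
  simp [criticalWords, h, and_comm]

theorem truncation_reverse (hX : BifixCode X) (D : ℕ) :
    truncation (List.reverse ⁻¹' X) D = List.reverse ⁻¹' truncation X D := by
  rw [truncation, truncation, hX.criticalWords_reverse, Set.preimage_union]
  congr 1
  ext w
  simp [← hX.parseCount_reverse]

theorem nil_notMem_criticalWords (hX : [] ∉ X) (hD : 0 < D) : [] ∉ criticalWords X D :=
  fun h => by have := h.1; rw [parseCount_nil hX] at this; lia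

theorem nil_notMem_truncation (hX : [] ∉ X) (hD : 0 < D) : [] ∉ truncation X D :=
  fun h => h.elim (fun h => hX h.1) (nil_notMem_criticalWords hX hD)

theorem not_hasPrefixIn_of_mem_criticalWords (hz : z ∈ criticalWords X D) : ¬ HasPrefixIn X z :=
  fun h => (hz.1.trans_le (parseCount_eq_tail h).le).not_ge hz.2.1

theorem prefix_dropLast_of_ne (h : u <+: w) (hne : u ≠ w) : u <+: w.dropLast := by
  rcases List.eq_nil_or_concat w with rfl | ⟨v, b, rfl⟩
  · exact absurd (List.prefix_nil.1 h) hne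
  · rw [List.concat_eq_append] at *
    rw [List.dropLast_concat]
    exact (List.prefix_concat_iff.1 h).resolve_left hne

theorem eq_of_prefix_of_lt_parseCount (hX : BifixCode X) (hu : D < parseCount X u)
    (hz : parseCount X z.dropLast ≤ D) (huz : u <+: z) : u = z := by
  by_contra hne
  have := hX.parseCount_le_of_isInfix (prefix_dropLast_of_ne huz hne).isInfix
  lia

theorem prefixCode_truncation (hX : BifixCode X) (hD : 0 < D) (hne : (truncation X D).Nonempty) :
    PrefixCode (truncation X D) := by
  refine ⟨hne, fun x hx => ne_of_mem_of_not_mem hx (nil_notMem_truncation hX.nil_notMem hD), ?_⟩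
  intro x hx y hy hxy
  rcases hx with hx | hx
  · rcases hy with hy | hy
    · exact hX.1.2.2 x hx.1 y hy.1 hxy
    · exact absurd ⟨x, hx.1, hxy⟩ (not_hasPrefixIn_of_mem_criticalWords hy)
  · refine hX.eq_of_prefix_of_lt_parseCount hx.1 ?_ hxy
    rcases hy with hy | hy
    · exact (hX.parseCount_le_of_isInfix y.dropLast_prefix.isInfix).trans hy.2
    · exact hy.2.2

theorem bifixCode_truncation (hX : BifixCode X) (hD : 0 < D) (hne : (truncation X D).Nonempty) :
    BifixCode (truncation X D) := by
  refine ⟨hX.prefixCode_truncation hD hne, suffixCode_iff_prefixCode_reverse.2 ?_⟩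
  rw [← hX.truncation_reverse]
  refine hX.reverse.prefixCode_truncation hD ?_
  rw [hX.truncation_reverse]
  exact hne.preimage List.reverse_surjective

theorem hasPrefixIn_truncation (hX : BifixCode X) (hD : 0 < D) :
    HasPrefixIn (truncation X D) w ↔ D < parseCount X w ∨ HasPrefixIn X w := by
  constructor
  · rintro ⟨z, hz | hz, hzw⟩
    · exact .inr ⟨z, hz.1, hzw⟩
    · exact .inl (hz.1.trans_le (hX.parseCount_le_of_isInfix hzw.isInfix))
  induction w using List.reverseRecOn with
  | nil => simp [parseCount_nil hX.nil_notMem, not_hasPrefixIn_nil hX.nil_notMem, hD.ne']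
  | append_singleton w b ih =>
    intro h
    rw [hasPrefixIn_concat] at h ⊢
    by_cases hw : D < parseCount X w ∨ HasPrefixIn X w
    · exact .inr (ih hw)
    obtain ⟨hwD, hwX⟩ := not_or.1 hw
    left
    by_cases hmem : w ++ [b] ∈ X
    · have := hX.parseCount_eq_dropLast (hasSuffixIn_of_mem hmem)
      rw [List.dropLast_concat] at this
      exact .inl ⟨hmem, by lia⟩
    · have hlt : D < parseCount X (w ++ [b]) := h.resolve_right (by tauto)
      have htail := parseCount_eq_tail_add_one (X := X) (w := w ++ [b]) (by simp)
        (by rw [hasPrefixIn_concat]; tauto)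
      have hle := hX.parseCount_le_dropLast_add_one (w ++ [b])
      rw [List.dropLast_concat] at hle
      exact .inr ⟨hlt, by lia, by rw [List.dropLast_concat]; lia⟩

theorem parseCount_truncation (hX : BifixCode X) (hD : 0 < D) (w : List A) :
    parseCount (truncation X D) w = min D (parseCount X w) := by
  classical
  induction w with
  | nil =>
    rw [parseCount_nil hX.nil_notMem, parseCount_nil (nil_notMem_truncation hX.nil_notMem hD)]
    lia
  | cons a w ih =>
    have := hX.hasPrefixIn_truncation hD (w := a :: w)
    rw [parseCount_cons] at this ⊢
    rw [parseCount_cons, ih]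
    split_ifs at * <;> grind

/-! ### Rationality -/

theorem isRational_iff_isRegular : IsRational X ↔ Language.IsRegular X :=
  exists_congr fun _ => exists_congr fun _ => exists_congr fun _ => Set.ext_iff.symm

theorem isRational_iff_finite_range_leftQuotient :
    IsRational X ↔ (Set.range (Language.leftQuotient X)).Finite :=
  isRational_iff_isRegular.trans Language.isRegular_iff_finite_range_leftQuotient

theorem isRational_of_finite_range {τ : Type*} (f : List A → τ) (hf : (Set.range f).Finite)
    (h : ∀ w w', f w = f w' → ∀ v, w ++ v ∈ X ↔ w' ++ v ∈ X) : IsRational X := by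
  rw [isRational_iff_finite_range_leftQuotient]
  have hfactor : (Language.leftQuotient X).FactorsThrough f :=
    fun w w' hw => Set.ext (h w w' hw)
  rw [← hfactor.extend_comp fun _ => 0, Set.range_comp]
  exact hf.image _

theorem append_mem_congr (h : Language.leftQuotient X u = Language.leftQuotient X v)
    (w : List A) : u ++ w ∈ X ↔ v ++ w ∈ X :=
  Set.ext_iff.1 h w

theorem _root_.IsRational.compl (hX : IsRational X) : IsRational Xᶜ :=
  isRational_iff_isRegular.2 (isRational_iff_isRegular.1 hX).compl

theorem _root_.IsRational.union (hX : IsRational X) (hY : IsRational Y) : IsRational (X ∪ Y) :=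
  isRational_iff_isRegular.2
    ((isRational_iff_isRegular.1 hX).add (isRational_iff_isRegular.1 hY))

theorem _root_.IsRational.inter (hX : IsRational X) (hY : IsRational Y) : IsRational (X ∩ Y) :=
  isRational_iff_isRegular.2
    ((isRational_iff_isRegular.1 hX).inf (isRational_iff_isRegular.1 hY))

theorem _root_.IsRational.reverse (hX : IsRational X) : IsRational (List.reverse ⁻¹' X) :=
  isRational_iff_isRegular.2 (isRational_iff_isRegular.1 hX).reverse

theorem _root_.IsRational.preimage_tail (hX : IsRational X) : IsRational (List.tail ⁻¹' X) := by
  rw [isRational_iff_finite_range_leftQuotient] at hX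
  refine isRational_of_finite_range (fun w => (w = [], Language.leftQuotient X w.tail))
    ((Set.finite_univ.prod hX).subset ?_) fun w w' hw v => ?_
  · rintro _ ⟨w, rfl⟩
    exact ⟨trivial, w.tail, rfl⟩
  · obtain ⟨hnil, hquot⟩ := Prod.mk.inj hw
    rcases eq_or_ne w [] with rfl | hne
    · rw [show w' = [] by simpa using hnil]
    · have hne' : w' ≠ [] := by simpa [hne] using hnil
      simpa [List.tail_append_of_ne_nil, hne, hne'] using append_mem_congr hquot v

theorem _root_.IsRational.preimage_dropLast (hX : IsRational X) :
    IsRational (List.dropLast ⁻¹' X) := by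
  have hdropLast : List.reverse ⁻¹' (List.tail ⁻¹' (List.reverse ⁻¹' X)) = List.dropLast ⁻¹' X := by
    ext w; simp
  exact hdropLast ▸ hX.reverse.preimage_tail.reverse

theorem isRational_hasSuffixIn (hX : IsRational X) : IsRational {w | HasSuffixIn X w} := by
  rw [isRational_iff_finite_range_leftQuotient] at hX
  refine isRational_of_finite_range (fun w => Language.leftQuotient X '' {s | s <:+ w})
    (hX.finite_subsets.subset ?_) fun w w' hw v => ?_
  · rintro _ ⟨w, rfl⟩
    exact Set.image_subset_range _ _
  · have happend (w : List A) : HasSuffixIn X (w ++ v) ↔ HasSuffixIn X v ∨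
        ∃ q ∈ Language.leftQuotient X '' {s | s <:+ w}, v ∈ q := by
      simp only [Set.exists_mem_image]
      constructor
      · rintro ⟨x, hx, hxw⟩
        rcases List.suffix_or_suffix_of_suffix hxw (List.suffix_append w v) with hxv | ⟨s, rfl⟩
        · exact .inl ⟨x, hx, hxv⟩
        · exact .inr ⟨s, List.suffix_append_self_iff.1 hxw, hx⟩
      · rintro (⟨x, hx, hxv⟩ | ⟨s, hs, hsv⟩)
        · exact ⟨x, hx, hxv.trans (List.suffix_append w v)⟩
        · exact ⟨s ++ v, hsv, List.suffix_append_self_iff.2 hs⟩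
    rw [Set.mem_ofPred_eq, Set.mem_ofPred_eq, happend, happend]
    exact or_congr_right (by rw [hw])

theorem parseCount_append_add_comm (hX : BifixCode X)
    (h : ∀ t, HasSuffixIn X (u ++ t) ↔ HasSuffixIn X (v ++ t)) (w : List A) :
    parseCount X (u ++ w) + parseCount X v = parseCount X (v ++ w) + parseCount X u := by
  classical
  induction w using List.reverseRecOn with
  | nil => rw [List.append_nil, List.append_nil, add_comm]
  | append_singleton w b ih =>
    have := h (w ++ [b])
    rw [← List.append_assoc, ← List.append_assoc] at this ⊢
    rw [hX.parseCount_concat, hX.parseCount_concat, if_congr this rfl rfl]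
    lia

theorem isRational_lt_parseCount (hX : BifixCode X) (hr : IsRational X) (D : ℕ) :
    IsRational {w | D < parseCount X w} := by
  have hfin := isRational_iff_finite_range_leftQuotient.1 (isRational_hasSuffixIn hr)
  refine isRational_of_finite_range
    (fun w => (min (D + 1) (parseCount X w), Language.leftQuotient {w | HasSuffixIn X w} w))
    (((Set.finite_Iic (D + 1)).prod hfin).subset ?_) fun w w' hw v => ?_
  · rintro _ ⟨w, rfl⟩
    exact ⟨Set.mem_Iic.2 (min_le_left _ _), w, rfl⟩
  · have : min (D + 1) (parseCount X w) = min (D + 1) (parseCount X w') := congrArg Prod.fst hw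
    have := hX.parseCount_append_add_comm (append_mem_congr (congrArg Prod.snd hw)) v
    have := hX.parseCount_le_of_isInfix (List.prefix_append w v).isInfix
    have := hX.parseCount_le_of_isInfix (List.prefix_append w' v).isInfix
    rw [Set.mem_ofPred_eq, Set.mem_ofPred_eq]
    lia

theorem isRational_criticalWords (hX : BifixCode X) (hr : IsRational X) (D : ℕ) :
    IsRational (criticalWords X D) := by
  have hlt := hX.isRational_lt_parseCount hr D
  have heq : criticalWords X D = {w | D < parseCount X w} ∩
      ((List.tail ⁻¹' {w | D < parseCount X w})ᶜ ∩
        (List.dropLast ⁻¹' {w | D < parseCount X w})ᶜ) := by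
    ext w; simp [criticalWords]
  rw [heq]
  exact hlt.inter (hlt.preimage_tail.compl.inter hlt.preimage_dropLast.compl)

theorem isRational_truncation (hX : BifixCode X) (hr : IsRational X) (D : ℕ) :
    IsRational (truncation X D) := by
  have heq : {x ∈ X | parseCount X x ≤ D} = X ∩ {w | D < parseCount X w}ᶜ := by
    ext w; simp
  rw [truncation, heq]
  exact (hr.inter (hX.isRational_lt_parseCount hr D).compl).union (hX.isRational_criticalWords hr D)

/-! ### Enlarging a bifix code -/

/-- The prefixes of words of `X`. -/
def prefixesOf (X : Set (List A)) : Set (List A) := {w | ∃ x ∈ X, w <+: x}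

/-- The suffixes of words of `X`. -/
def suffixesOf (X : Set (List A)) : Set (List A) := {w | ∃ x ∈ X, w <:+ x}

theorem mem_prefixesOf_of_isPrefix (h : w ∈ prefixesOf X) (huw : u <+: w) : u ∈ prefixesOf X :=
  h.imp fun _ hx => ⟨hx.1, huw.trans hx.2⟩

theorem suffixesOf_eq_reverse_prefixesOf (X : Set (List A)) :
    suffixesOf X = List.reverse ⁻¹' prefixesOf (List.reverse ⁻¹' X) := by
  ext w
  constructor
  · exact fun ⟨x, hx, hwx⟩ => ⟨x.reverse, by simpa using hx, List.reverse_prefix.2 hwx⟩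
  · exact fun ⟨x, hx, hwx⟩ => ⟨x.reverse, hx, by simpa using List.reverse_suffix.2 hwx⟩

theorem isRational_prefixesOf (hX : IsRational X) : IsRational (prefixesOf X) := by
  refine isRational_of_finite_range (Language.leftQuotient X)
    (isRational_iff_finite_range_leftQuotient.1 hX) fun w w' hw v => ?_
  have hmem (u : List A) : u ∈ prefixesOf X ↔ ∃ t, u ++ t ∈ X :=
    ⟨fun ⟨_, hx, t, ht⟩ => ⟨t, ht ▸ hx⟩, fun ⟨t, ht⟩ => ⟨_, ht, List.prefix_append u t⟩⟩
  simp only [hmem, List.append_assoc, append_mem_congr hw]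

theorem isRational_suffixesOf (hX : IsRational X) : IsRational (suffixesOf X) :=
  suffixesOf_eq_reverse_prefixesOf X ▸ (isRational_prefixesOf hX.reverse).reverse

/-- `X` together with the critical words that are not prefix- or suffix-comparable to `X`. -/
def extension (X : Set (List A)) (D : ℕ) : Set (List A) :=
  X ∪ criticalWords X D \ (prefixesOf X ∪ suffixesOf X)

theorem subset_extension (X : Set (List A)) (D : ℕ) : X ⊆ extension X D := Set.subset_union_left

theorem extension_reverse (hX : BifixCode X) (D : ℕ) :
    extension (List.reverse ⁻¹' X) D = List.reverse ⁻¹' extension X D := by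
  have hleft : List.reverse ⁻¹' prefixesOf X = suffixesOf (List.reverse ⁻¹' X) := by
    rw [suffixesOf_eq_reverse_prefixesOf, preimage_reverse_preimage_reverse]
  have hright : List.reverse ⁻¹' suffixesOf X = prefixesOf (List.reverse ⁻¹' X) := by
    rw [suffixesOf_eq_reverse_prefixesOf, preimage_reverse_preimage_reverse]
  rw [extension, extension, Set.preimage_union, Set.preimage_sdiff, Set.preimage_union, hleft,
    hright, hX.criticalWords_reverse, Set.union_comm (suffixesOf _)]

theorem prefixCode_extension (hX : BifixCode X) (hD : 0 < D) : PrefixCode (extension X D) := by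
  refine ⟨hX.1.1.mono (subset_extension X D), ?_, ?_⟩
  · rintro x (hx | hx)
    · exact hX.1.2.1 x hx
    · exact ne_of_mem_of_not_mem hx.1 (nil_notMem_criticalWords hX.nil_notMem hD)
  · rintro x (hx | hx) y (hy | hy) hxy
    · exact hX.1.2.2 x hx y hy hxy
    · exact absurd ⟨x, hx, hxy⟩ (not_hasPrefixIn_of_mem_criticalWords hy.1)
    · exact absurd (.inl ⟨y, hy, hxy⟩) hx.2
    · exact hX.eq_of_prefix_of_lt_parseCount hx.1.1 hy.1.2.2 hxy

theorem bifixCode_extension (hX : BifixCode X) (hD : 0 < D) : BifixCode (extension X D) := by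
  refine ⟨hX.prefixCode_extension hD, suffixCode_iff_prefixCode_reverse.2 ?_⟩
  rw [← hX.extension_reverse]
  exact hX.reverse.prefixCode_extension hD

theorem isRational_extension (hX : BifixCode X) (hr : IsRational X) (D : ℕ) :
    IsRational (extension X D) :=
  hr.union ((hX.isRational_criticalWords hr D).inter
    ((isRational_prefixesOf hr).union (isRational_suffixesOf hr)).compl)

/-! ### Overhangs -/

/-- The ways in which an occurrence of `u` preceded by `l` can be overlapped on the left by a word
of `X` that reaches at least to the end of `u`; such a word is recorded by its part `s` inside `l`.
Overhangs on the right are those of the reversed words. -/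
def leftOverhangs (X : Set (List A)) (l u : List A) : Set (List A) :=
  {s | s ≠ [] ∧ s <:+ l ∧ s ++ u ∈ prefixesOf X}

/-- Every occurrence of a word `u` with at least `D` parses, preceded by `l` and followed by
`r.reverse`, has at most `k` left and right overhangs altogether. -/
def OverhangBound (X : Set (List A)) (D k : ℕ) : Prop :=
  ∀ l u r, D ≤ parseCount X u →
    (leftOverhangs X l u).ncard + (leftOverhangs (List.reverse ⁻¹' X) r u.reverse).ncard ≤ k

theorem finite_leftOverhangs (X : Set (List A)) (l u : List A) : (leftOverhangs X l u).Finite :=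
  (List.finite_toSet l.tails).subset fun _ hs => (List.mem_tails _ _).2 hs.2.1

/- Two overhangs `s`, `s'` with `s ++ u` and `s' ++ u` in the same state extend by a common word to
elements of `X`, one of which is a suffix of the other. -/
theorem ncard_leftOverhangs_le (hX : SuffixCode X) (hr : IsRational X) (l u : List A) :
    (leftOverhangs X l u).ncard ≤ (Set.range (Language.leftQuotient X)).ncard := by
  refine Set.ncard_le_ncard_of_injOn (fun s => Language.leftQuotient X (s ++ u))
    (fun s _ => ⟨s ++ u, rfl⟩) ?_ (isRational_iff_finite_range_leftQuotient.1 hr)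
  rintro s ⟨-, hs, x, hx, t, rfl⟩ s' ⟨-, hs', -⟩ hquot
  have hx' : s' ++ u ++ t ∈ X := (append_mem_congr hquot t).1 hx
  simp only [List.append_assoc] at hx hx'
  suffices s ++ (u ++ t) = s' ++ (u ++ t) from List.append_cancel_right this
  rcases List.suffix_or_suffix_of_suffix hs hs' with h | h
  · exact hX.2.2 _ hx _ hx' (List.suffix_append_self_iff.2 h)
  · exact (hX.2.2 _ hx' _ hx (List.suffix_append_self_iff.2 h)).symm

theorem exists_overhangBound (hX : BifixCode X) (hr : IsRational X) (D : ℕ) :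
    ∃ k, OverhangBound X D k :=
  ⟨_, fun l u r _ => Nat.add_le_add (ncard_leftOverhangs_le hX.2 hr l u)
    (ncard_leftOverhangs_le hX.reverse.2 hr.reverse r u.reverse)⟩

theorem image_append_leftOverhangs_subset (X : Set (List A)) (l m u t : List A) :
    (· ++ m) '' leftOverhangs X l (m ++ u ++ t) ⊆ leftOverhangs X (l ++ m) u := by
  rintro _ ⟨s, ⟨hs, hsl, hmem⟩, rfl⟩
  exact ⟨by simp [hs], List.suffix_append_self_iff.2 hsl,
    mem_prefixesOf_of_isPrefix hmem ⟨t, by simp⟩⟩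

theorem ncard_leftOverhangs_le_append (X : Set (List A)) (l m u t : List A) :
    (leftOverhangs X l (m ++ u ++ t)).ncard ≤ (leftOverhangs X (l ++ m) u).ncard := by
  rw [← Set.ncard_image_of_injective _ (List.append_left_injective m)]
  exact Set.ncard_le_ncard (image_append_leftOverhangs_subset X l m u t) (finite_leftOverhangs ..)

theorem ncard_leftOverhangs_lt_append {a : A} (h : a :: u ∈ prefixesOf X) (l m t : List A) :
    (leftOverhangs X l (m ++ [a] ++ u ++ t)).ncard <
      (leftOverhangs X (l ++ (m ++ [a])) u).ncard := by
  rw [← Set.ncard_image_of_injective _ (List.append_left_injective (m ++ [a]))]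
  refine Set.ncard_lt_ncard ?_ (finite_leftOverhangs ..)
  refine ⟨image_append_leftOverhangs_subset X l (m ++ [a]) u t, fun hsub => ?_⟩
  obtain ⟨s, ⟨hs, -⟩, hsa⟩ := hsub (show [a] ∈ leftOverhangs X (l ++ (m ++ [a])) u from
    ⟨by simp, ⟨l ++ m, by simp⟩, h⟩)
  have hlength : s.length + (m.length + 1) = 1 := by simpa using congrArg List.length hsa
  exact hs (List.length_eq_zero_iff.1 (by lia))

theorem OverhangBound.reverse (hX : BifixCode X) (h : OverhangBound X D k) :
    OverhangBound (List.reverse ⁻¹' X) D k := by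
  intro l u r hu
  have := h r u.reverse l (by rwa [← hX.parseCount_reverse, List.reverse_reverse])
  rw [List.reverse_reverse] at this
  rwa [preimage_reverse_preimage_reverse, add_comm]

/- The overhangs of `u` all reach over the occurrence of `z.tail` in `u`, which has `z` itself as
a further overhang. -/
theorem OverhangBound.lt_of_criticalWord_mem_prefixesOf (h : OverhangBound X D k) (hX : [] ∉ X)
    (hD : 0 < D) (hz : z ∈ criticalWords X D) (hzX : z ∈ prefixesOf X) (hzu : z <:+: u)
    (l r : List A) :
    (leftOverhangs X l u).ncard + (leftOverhangs (List.reverse ⁻¹' X) r u.reverse).ncard < k := by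
  obtain ⟨m, t, rfl⟩ := hzu
  cases z with
  | nil => exact absurd hz (nil_notMem_criticalWords hX hD)
  | cons a z =>
    have hz_parse : D ≤ parseCount X z :=
      Nat.le_of_lt_succ (hz.1.trans_le (parseCount_le_tail_add_one X (a :: z)))
    have hbound := h (l ++ (m ++ [a])) z (r ++ t.reverse) hz_parse
    have hleft := ncard_leftOverhangs_lt_append hzX l m t
    have hright := ncard_leftOverhangs_le_append (List.reverse ⁻¹' X) r t.reverse z.reverse
      (m ++ [a]).reverse
    simp only [List.append_assoc, List.cons_append, List.nil_append, List.reverse_append,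
      List.reverse_cons, List.reverse_nil] at hbound hleft hright ⊢
    lia

theorem OverhangBound.lt_of_criticalWord (h : OverhangBound X D k) (hX : BifixCode X)
    (hD : 0 < D) (hz : z ∈ criticalWords X D) (hzX : z ∈ prefixesOf X ∪ suffixesOf X)
    (hzu : z <:+: u) (l r : List A) :
    (leftOverhangs X l u).ncard + (leftOverhangs (List.reverse ⁻¹' X) r u.reverse).ncard < k := by
  rcases hzX with hzX | hzX
  · exact h.lt_of_criticalWord_mem_prefixesOf hX.nil_notMem hD hz hzX hzu l r
  · rw [suffixesOf_eq_reverse_prefixesOf] at hzX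
    have hz' : z.reverse ∈ criticalWords (List.reverse ⁻¹' X) D := by
      simpa [hX.criticalWords_reverse] using hz
    have := (OverhangBound.reverse hX h).lt_of_criticalWord_mem_prefixesOf hX.reverse.nil_notMem hD
      hz' hzX (List.reverse_infix.2 hzu) r l
    rw [preimage_reverse_preimage_reverse, List.reverse_reverse] at this
    lia

/- A critical word has at most `D + 1` parses, so it cannot have `u` as a factor. -/
theorem leftOverhangs_extension_subset (hX : BifixCode X) (hu : D + 2 ≤ parseCount X u)
    (l : List A) : leftOverhangs (extension X D) l u ⊆ leftOverhangs X l u := by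
  rintro s ⟨hs, hsl, x, hx | hx, hsx⟩
  · exact ⟨hs, hsl, x, hx, hsx⟩
  · have hux := hX.parseCount_le_of_isInfix ((List.suffix_append s u).isInfix.trans hsx.isInfix)
    have := parseCount_le_tail_add_one X x
    have := hx.1.2.1
    lia

/- If an occurrence of `u` had the maximal number `k + 1` of overhangs, then all critical words of
`X` in `u` would be in the extension, so that `u` would have at most `D` parses for the latter. -/
theorem OverhangBound.extension_add_two (h : OverhangBound X D (k + 1)) (hX : BifixCode X)
    (hD : 0 < D) : OverhangBound (extension X D) (D + 2) k := by
  intro l u r hu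
  have hu' : D + 2 ≤ parseCount X u :=
    hu.trans (parseCount_anti fun _ _ hz => subset_extension X D hz)
  have hleft := Set.ncard_le_ncard (hX.leftOverhangs_extension_subset hu' l)
    (finite_leftOverhangs ..)
  rw [← hX.parseCount_reverse] at hu'
  have hright := Set.ncard_le_ncard (hX.reverse.leftOverhangs_extension_subset hu' r)
    (finite_leftOverhangs ..)
  rw [hX.extension_reverse] at hright
  obtain ⟨z, hzu, hz, hz_not⟩ : ∃ z, z <:+: u ∧ z ∈ truncation X D ∧ z ∉ extension X D := by
    by_contra! hsub
    have := parseCount_anti hsub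
    rw [hX.parseCount_truncation hD] at this
    lia
  have hz_critical : z ∈ criticalWords X D :=
    hz.resolve_left fun hz => hz_not (subset_extension X D hz.1)
  have hz_comparable : z ∈ prefixesOf X ∪ suffixesOf X :=
    not_not.1 fun hz => hz_not (.inr ⟨hz_critical, hz⟩)
  have := h.lt_of_criticalWord hX hD hz_critical hz_comparable hzu l r
  lia

theorem OverhangBound.subset_truncation (h : OverhangBound X D 0) (hX : [] ∉ X) :
    X ⊆ truncation X D := by
  intro x hx
  refine .inl ⟨hx, ?_⟩
  cases x with
  | nil => contradiction
  | cons a u =>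
    rw [parseCount_eq_tail (hasPrefixIn_of_mem hx), List.tail_cons]
    by_contra! hu
    have ha : [a] ∈ leftOverhangs X [a] u :=
      ⟨by simp, List.suffix_rfl, _, hx, List.prefix_rfl⟩
    have := (Set.ncard_pos (finite_leftOverhangs X [a] u)).2 ⟨_, ha⟩
    have := h [a] u [] hu.le
    lia

theorem OverhangBound.exists_complete (h : OverhangBound X D k) (hX : BifixCode X) (hD : 0 < D) :
    ∃ Z, (IsRational X → IsRational Z) ∧ BifixCode Z ∧ FComplete Z Set.univ ∧ X ⊆ Z := by
  induction k generalizing X D with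
  | zero =>
    have hsub := h.subset_truncation hX.nil_notMem
    have hZ := hX.bifixCode_truncation hD (hX.1.1.mono hsub)
    have hbdd : BddAbove (Set.range (parseCount (truncation X D))) :=
      ⟨D, by rintro _ ⟨w, rfl⟩; simp [hX.parseCount_truncation hD]⟩
    exact ⟨truncation X D, (hX.isRational_truncation · D), hZ,
      hZ.fComplete_of_bddAbove_parseCount hbdd, hsub⟩
  | succ k ih =>
    obtain ⟨Z, hrat, hZ, hcomplete, hsub⟩ :=
      ih (h.extension_add_two hX hD) (hX.bifixCode_extension hD) (Nat.add_pos_left hD 2)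
    exact ⟨Z, fun hr => hrat (hX.isRational_extension hr D), hZ, hcomplete,
      (subset_extension X D).trans hsub⟩

end BifixCode

theorem rational_bifix_contained_in_rational_complete_bifix_general
    {A : Type*} (X : Set (List A)) (hXrat : IsRational X) (hXbifix : BifixCode X) :
    ∃ Z : Set (List A), IsRational Z ∧ BifixCode Z ∧ FComplete Z Set.univ ∧ X ⊆ Z := by
  obtain ⟨k, hk⟩ := hXbifix.exists_overhangBound hXrat 1
  obtain ⟨Z, hZrat, hZ⟩ := hk.exists_complete hXbifix one_pos
  exact ⟨Z, hZrat hXrat, hZ⟩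

/-- Every rational bifix code is contained in a rational complete
bifix code. -/
theorem rational_bifix_contained_in_rational_complete_bifix
    {A : Type*} [Fintype A] [Nonempty A] (X : Set (List A))
    (hXrat : IsRational X) (hXbifix : BifixCode X) :
    ∃ Z : Set (List A), IsRational Z ∧ BifixCode Z ∧ FComplete Z Set.univ ∧
      X ⊆ Z :=
  rational_bifix_contained_in_rational_complete_bifix_general X hXrat hXbifix
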